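/- arXiv:2410.21463 — 8 statements merged into one kernel-verified Lean document; each statement's English description precedes it below -/
import Mathlib

section
/- Let f : ℝ → ℝ be a homeomorphism of ℝ (a continuous bijection with continuous inverse) such that f(x) = x for all x outside the interval [1/2, 2]. Then the map F : ℝ × ℝ → ℝ × ℝ defined by F(x,y) = (x, x·f(y/x)) for x ≠ 0 and F(0,y) = (0,y) is a homeomorphism of the plane; moreover its inverse is the map G defined by G(x,y) = (x, x·f⁻¹(y/x)) for x ≠ 0 and G(0,y) = (0,y), where f⁻¹ is the inverse of f. -/
/-- The map `F(x,y) = (x, x·f(y/x))` for `x ≠ 0`, `F(0,y) = (0,y)`. -/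
noncomputable def Fmap (f : ℝ → ℝ) : ℝ × ℝ → ℝ × ℝ :=
  fun p => if p.1 = 0 then p else (p.1, p.1 * f (p.2 / p.1))

theorem Fmap_cont (f : ℝ → ℝ) (hf : Continuous f)
    (hid : ∀ x : ℝ, x ∉ Set.Icc (1/2 : ℝ) 2 → f x = x) : Continuous (Fmap f) := by
  obtain ⟨C, hC⟩ := (isCompact_Icc (a := (1/2 : ℝ)) (b := 2)).exists_bound_of_continuousOn
    (f := fun t => f t - t) (by fun_prop)
  have hb : ∀ t, ‖f t - t‖ ≤ max C 0 := by
    intro t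
    by_cases ht : t ∈ Set.Icc (1/2 : ℝ) 2
    · exact (hC t ht).trans (le_max_left _ _)
    · rw [hid t ht]; simp
  have key : Fmap f = fun p => (p.1, p.2 + p.1 * (f (p.2 / p.1) - p.2 / p.1)) := by
    funext p
    unfold Fmap
    split_ifs with h
    · ext <;> simp [h]
    · ext
      · rfl
      · simp only
        field_simp
        ring
  rw [key]
  refine continuous_fst.prodMk (continuous_snd.add ?_)
  rw [continuous_iff_continuousAt]
  intro p
  by_cases h : p.1 = 0
  · unfold ContinuousAt
    simp only [h, zero_mul]
    apply squeeze_zero_norm (a := fun q : ℝ × ℝ => ‖q.1‖ * max C 0)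
    · intro q
      rw [norm_mul]
      exact mul_le_mul_of_nonneg_left (hb _) (norm_nonneg _)
    · have : Continuous (fun q : ℝ × ℝ => ‖q.1‖ * max C 0) := by fun_prop
      have h2 := this.tendsto p
      simpa [h] using h2
  · have hd : ContinuousAt (fun q : ℝ × ℝ => q.2 / q.1) p :=
      continuousAt_snd.div continuousAt_fst h
    exact continuousAt_fst.mul ((hf.continuousAt.comp hd).sub hd)

theorem Fmap_inv (f g : ℝ → ℝ) (hgf : Function.LeftInverse g f) :
    Function.LeftInverse (Fmap g) (Fmap f) := by
  intro p
  by_cases h : p.1 = 0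
  · simp [Fmap, h]
  · ext
    · simp [Fmap, h]
    · simp [Fmap, h, hgf _, mul_div_cancel₀]

/-- If `f` is a homeomorphism of `ℝ` with inverse `g`, equal to the identity outside
`[1/2, 2]`, then `F` is a homeomorphism of the plane with inverse given by the
corresponding map built from `g`. -/
theorem stmt0 (f g : ℝ → ℝ)
    (hf : Continuous f) (hg : Continuous g)
    (hgf : Function.LeftInverse g f) (hfg : Function.RightInverse g f)
    (hid : ∀ x : ℝ, x ∉ Set.Icc (1/2 : ℝ) 2 → f x = x) :
    IsHomeomorph (Fmap f) ∧
      Function.LeftInverse (Fmap g) (Fmap f) ∧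
      Function.RightInverse (Fmap g) (Fmap f) := by
  have hidg : ∀ x : ℝ, x ∉ Set.Icc (1/2 : ℝ) 2 → g x = x := by
    intro x hx
    have := hgf x
    rwa [hid x hx] at this
  have h1 := Fmap_inv f g hgf
  have h2 := Fmap_inv g f hfg
  refine ⟨?_, h1, h2⟩
  exact (Homeomorph.mk ⟨Fmap f, Fmap g, h1, h2⟩ (Fmap_cont f hf hid)
    (Fmap_cont g hg hidg)).isHomeomorph
end

section
/- Let f : ℝ → ℝ satisfy f(x) = x for all x outside the interval [1/2, 2] and f(1) ≠ 1. Then the map F : ℝ × ℝ → ℝ × ℝ defined by F(x,y) = (x, x·f(y/x)) for x ≠ 0 and F(0,y) = (0,y) is not (Fréchet) differentiable at the origin (0,0). -/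
/-- If `f(x) = x` outside `[1/2, 2]` and `f(1) ≠ 1`, then `F` is not Fréchet
differentiable at the origin. -/
theorem stmt1 (f : ℝ → ℝ)
    (hid : ∀ x : ℝ, x ∉ Set.Icc (1/2 : ℝ) 2 → f x = x)
    (hne : f 1 ≠ 1) :
    ¬ DifferentiableAt ℝ (Fmap f) (0, 0) := by
  intro ⟨L, hL⟩
  have key : ∀ v w : ℝ × ℝ, (∀ t : ℝ, Fmap f (t • v) = t • w) → L v = w := by
    intro v w h
    have hv : HasDerivAt (fun t : ℝ => t • v) v 0 := by
      simpa using (hasDerivAt_id (0 : ℝ)).smul_const v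
    have hw : HasDerivAt (fun t : ℝ => t • w) w 0 := by
      simpa using (hasDerivAt_id (0 : ℝ)).smul_const w
    have hL' : HasFDerivAt (Fmap f) L ((0 : ℝ) • v) := by
      rw [zero_smul]; exact hL
    have hc := hL'.comp_hasDerivAt (0 : ℝ) hv
    have he : (Fmap f ∘ fun t : ℝ => t • v) = fun t : ℝ => t • w := funext h
    rw [he] at hc
    exact hc.unique hw
  have h0 : f 0 = 0 := hid 0 (by norm_num)
  have h1 : L (1, 0) = (1, 0) := by
    apply key
    intro t
    by_cases ht : t = 0 <;> simp [Fmap, ht, h0]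
  have h2 : L (0, 1) = (0, 1) := by
    apply key
    intro t
    simp [Fmap]
  have h3 : L (1, 1) = (1, f 1) := by
    apply key
    intro t
    by_cases ht : t = 0 <;> simp [Fmap, ht]
  have h4 : L (1, 1) = L (1, 0) + L (0, 1) := by
    rw [← map_add]; simp
  rw [h1, h2, h3] at h4
  apply hne
  simpa using congrArg Prod.snd h4
end

section
/- Let k ∈ ℕ ∪ {∞}, let f : ℝ → ℝ be C^k with f(x) = x for all x outside the interval [1/2, 2], and let g : ℝ → ℝ be C^k. Define h : ℝ → ℝ by h(x) = x·f(g(x)/x) for x ≠ 0 and h(0) = g(0). Then h is C^k, and the map F defined by F(x,y) = (x, x·f(y/x)) for x ≠ 0, F(0,y) = (0,y), maps the graph {(x, g(x)) : x ∈ ℝ} onto the graph {(x, h(x)) : x ∈ ℝ}. (This is the 'direct computation' showing that F maps C^k graph curves to C^k graph curves.) -/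
theorem aux_deriv (m : ℕ) (G : ℝ → ℝ) (hG : ContDiff ℝ 1 G) (x₀ : ℝ) :
    HasDerivAt (fun x => ∫ t in (0:ℝ)..1, t ^ m * G (t * x))
      (∫ t in (0:ℝ)..1, t ^ (m + 1) * deriv G (t * x₀)) x₀ := by
  have hc : Continuous G := hG.continuous
  have hc' : Continuous (deriv G) := hG.continuous_deriv_one
  obtain ⟨C, hC⟩ := ((isCompact_Icc (a := (0:ℝ)) (b := 1)).prod
    (isCompact_Icc (a := x₀ - 1) (b := x₀ + 1))).exists_bound_of_continuousOn
    (f := fun p : ℝ × ℝ => p.1 ^ (m + 1) * deriv G (p.1 * p.2))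
    (by apply Continuous.continuousOn; fun_prop)
  refine (intervalIntegral.hasDerivAt_integral_of_dominated_loc_of_deriv_le
    (F := fun x t => t ^ m * G (t * x)) (F' := fun x t => t ^ (m + 1) * deriv G (t * x))
    (s := Set.Icc (x₀ - 1) (x₀ + 1)) (bound := fun _ => C)
    (Icc_mem_nhds (by linarith) (by linarith)) ?_ ?_ ?_ ?_ ?_ ?_).2
  · refine Filter.Eventually.of_forall fun x => ?_
    apply Continuous.aestronglyMeasurable
    fun_prop
  · apply Continuous.intervalIntegrable
    fun_prop
  · apply Continuous.aestronglyMeasurable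
    fun_prop
  · refine Filter.Eventually.of_forall fun t ht x hx => ?_
    rw [Set.uIoc_of_le zero_le_one] at ht
    exact hC (t, x) ⟨⟨ht.1.le, ht.2⟩, hx⟩
  · exact continuous_const.intervalIntegrable _ _
  · refine Filter.Eventually.of_forall fun t ht x hx => ?_
    have h1 : HasDerivAt G (deriv G (t * x)) (t * x) :=
      (hG.differentiable (by norm_num) _).hasDerivAt
    have h2 : HasDerivAt (fun x : ℝ => t * x) t x := by
      simpa using (hasDerivAt_id x).const_mul t
    have h3 := (h1.comp x h2).const_mul (t ^ m)
    refine h3.congr_deriv ?_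
    ring

theorem aux_contDiff (n : ℕ) : ∀ (m : ℕ) (G : ℝ → ℝ), ContDiff ℝ n G →
    ContDiff ℝ n (fun x => ∫ t in (0:ℝ)..1, t ^ m * G (t * x)) := by
  induction n with
  | zero =>
    intro m G hG
    have hc : Continuous G := hG.continuous
    simp only [Nat.cast_zero, contDiff_zero]
    apply intervalIntegral.continuous_parametric_intervalIntegral_of_continuous'
    simp only [Function.uncurry_def]
    fun_prop
  | succ n ih =>
    intro m G hG
    have h1 : ContDiff ℝ 1 G := hG.of_le (by exact_mod_cast Nat.succ_le_succ (Nat.zero_le n))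
    push_cast at hG ⊢
    rw [contDiff_succ_iff_deriv] at hG ⊢
    refine ⟨fun x => (aux_deriv m G h1 x).differentiableAt, by simp, ?_⟩
    have : deriv (fun x => ∫ t in (0:ℝ)..1, t ^ m * G (t * x)) =
        fun x => ∫ t in (0:ℝ)..1, t ^ (m + 1) * deriv G (t * x) :=
      funext fun x => (aux_deriv m G h1 x).deriv
    rw [this]
    exact ih _ _ hG.2.2

theorem aux_hadamard (n : ℕ) (g : ℝ → ℝ) (hg : ContDiff ℝ (n + 1 : ℕ) g) (g0 : g 0 = 0) :
    ∃ u : ℝ → ℝ, ContDiff ℝ n u ∧ (∀ x, g x = x * u x) ∧ u 0 = deriv g 0 := by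
  have h1 : ContDiff ℝ 1 g := hg.of_le (by exact_mod_cast Nat.succ_le_succ (Nat.zero_le n))
  have hd : ContDiff ℝ n (deriv g) := by
    push_cast at hg
    exact (contDiff_succ_iff_deriv.1 hg).2.2
  refine ⟨_, aux_contDiff n 0 _ hd, fun x => ?_, by simp⟩
  have hc' : Continuous (deriv g) := hd.continuous
  have := intervalIntegral.integral_eq_sub_of_hasDerivAt (a := 0) (b := 1)
    (f := fun t => g (t * x)) (f' := fun t => x * deriv g (t * x)) (fun t _ => by
      have h1 : HasDerivAt g (deriv g (t * x)) (t * x) :=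
        (h1.differentiable (by norm_num) _).hasDerivAt
      have h2 : HasDerivAt (fun t : ℝ => t * x) x t := by
        simpa using (hasDerivAt_id t).mul_const x
      refine (h1.comp t h2).congr_deriv ?_
      ring) (by apply Continuous.intervalIntegrable; fun_prop)
  rw [intervalIntegral.integral_const_mul] at this
  simp [g0] at this
  simp [this]

theorem aux_main (n : ℕ) (f g : ℝ → ℝ) (hf : ContDiff ℝ (n + 1 : ℕ) f)
    (hg : ContDiff ℝ (n + 1 : ℕ) g) (g0 : g 0 = 0)
    (h : ℝ → ℝ) (h0 : h 0 = 0) (hh : ∀ x : ℝ, x ≠ 0 → h x = x * f (g x / x)) :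
    ContDiff ℝ (n + 1 : ℕ) h := by
  obtain ⟨u, hu, hgu, hu0⟩ := aux_hadamard n g hg g0
  have hfd : Differentiable ℝ f := hf.differentiable (by simp)
  have hgd : Differentiable ℝ g := hg.differentiable (by simp)
  have hhu : ∀ x, h x = x * f (u x) := by
    intro x
    by_cases hx : x = 0
    · simp [hx, h0]
    · rw [hh x hx, hgu x, mul_div_cancel_left₀ _ hx]
  have hD : ∀ x, HasDerivAt h (f (u x) + deriv f (u x) * (deriv g x - u x)) x := by
    intro x
    by_cases hx : x = 0
    · subst hx
      rw [← hu0, hasDerivAt_iff_tendsto_slope]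
      have hc : Continuous fun x => f (u x) := hfd.continuous.comp hu.continuous
      have ht : Filter.Tendsto (fun x => f (u x)) (nhdsWithin 0 {0}ᶜ) (nhds (f (u 0))) :=
        (hc.tendsto 0).mono_left nhdsWithin_le_nhds
      simp only [sub_self, mul_zero, add_zero]
      refine ht.congr' ?_
      filter_upwards [self_mem_nhdsWithin] with y hy
      have hy : y ≠ 0 := hy
      rw [slope_def_field, h0, hhu y]
      field_simp
      simp
    · have h1 : HasDerivAt (fun y => g y / y) ((deriv g x * x - g x * 1) / x ^ 2) x :=
        (hgd x).hasDerivAt.div (hasDerivAt_id x) hx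
      have hux : g x / x = u x := by rw [hgu x, mul_div_cancel_left₀ _ hx]
      have h2 : HasDerivAt f (deriv f (u x)) (g x / x) := by
        rw [hux]; exact (hfd _).hasDerivAt
      have h3 := (hasDerivAt_id x).mul (HasDerivAt.comp (h := fun y => g y / y) x h2 h1)
      have h4 : h =ᶠ[nhds x] (id * (f ∘ fun y => g y / y)) := by
        filter_upwards [isOpen_ne.mem_nhds hx] with y hy
        simp [hh y hy]
      refine (h3.congr_of_eventuallyEq h4).congr_deriv ?_
      simp only [Function.comp, hux, id]
      rw [hgu x]
      field_simp
  push_cast at hf hg ⊢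
  rw [contDiff_succ_iff_deriv] at hf hg ⊢
  refine ⟨fun x => (hD x).differentiableAt, by simp, ?_⟩
  rw [funext fun x => (hD x).deriv]
  have hf' : ContDiff ℝ n f := (contDiff_succ_iff_deriv.2 hf).of_le (by exact_mod_cast Nat.le_succ n)
  exact (hf'.comp hu).add ((hf.2.2.comp hu).mul (hg.2.2.sub hu))

/-- If `f` is `C^k` and equals the identity outside `[1/2, 2]`, and `g` is `C^k`,
then `h(x) = x·f(g(x)/x)` (with `h(0) = g(0)`) is `C^k`, and `F` maps the graph
of `g` onto the graph of `h`. -/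
theorem stmt3 (k : ℕ∞) (f g : ℝ → ℝ)
    (hf : ContDiff ℝ k f)
    (hid : ∀ x : ℝ, x ∉ Set.Icc (1/2 : ℝ) 2 → f x = x)
    (hg : ContDiff ℝ k g)
    (h : ℝ → ℝ)
    (hdef : ∀ x : ℝ, h x = if x = 0 then g 0 else x * f (g x / x)) :
    ContDiff ℝ k h ∧
      Fmap f '' {p : ℝ × ℝ | ∃ x : ℝ, p = (x, g x)} =
        {p : ℝ × ℝ | ∃ x : ℝ, p = (x, h x)} := by
  constructor
  · rw [contDiff_iff_forall_nat_le]
    intro m hm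
    replace hf : ContDiff ℝ m f := hf.of_le (by exact_mod_cast hm)
    replace hg : ContDiff ℝ m g := hg.of_le (by exact_mod_cast hm)
    clear hm
    have hh : ∀ x : ℝ, x ≠ 0 → h x = x * f (g x / x) := fun x hx => by rw [hdef, if_neg hx]
    have h0 : h 0 = g 0 := by rw [hdef, if_pos rfl]
    rw [contDiff_iff_contDiffAt]
    intro x
    by_cases hx : x = 0
    · subst hx
      by_cases g0 : g 0 = 0
      · cases m with
        | succ n => exact (aux_main n f g hf hg g0 h (h0.trans g0) hh).contDiffAt
        | zero =>
          apply ContDiff.contDiffAt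
          simp only [Nat.cast_zero, contDiff_zero] at hf hg ⊢
          rw [continuous_iff_continuousAt]
          intro x
          by_cases hx : x = 0
          · subst hx
            obtain ⟨C, hC⟩ := (isCompact_Icc (a := (1/2:ℝ)) (b := 2)).exists_bound_of_continuousOn
              hf.continuousOn
            have hb : ∀ x, |h x| ≤ |g x| + |x| * |C| := by
              intro x
              by_cases hx : x = 0
              · subst hx; simp [h0]
              · rw [hh x hx]
                by_cases hi : g x / x ∈ Set.Icc (1/2:ℝ) 2
                · have := (hC _ hi).trans (le_abs_self C)
                  rw [Real.norm_eq_abs] at this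
                  rw [abs_mul]
                  have := mul_le_mul_of_nonneg_left this (abs_nonneg x)
                  have := abs_nonneg (g x)
                  linarith
                · rw [hid _ hi, mul_div_cancel₀ _ hx]
                  have : 0 ≤ |x| * |C| := by positivity
                  linarith
            have ht : Filter.Tendsto (fun x => |g x| + |x| * |C|) (nhds 0) (nhds 0) := by
              have hc : Continuous (fun x => |g x| + |x| * |C|) := by fun_prop
              simpa [g0] using hc.tendsto 0
            rw [ContinuousAt, h0, g0]
            exact squeeze_zero_norm hb ht
          · have h4 : h =ᶠ[nhds x] fun y => y * f (g y / y) := by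
              filter_upwards [isOpen_ne.mem_nhds hx] with y hy using hh y hy
            refine ContinuousAt.congr ?_ h4.symm
            exact continuousAt_id.mul (hf.continuousAt.comp (hg.continuousAt.div continuousAt_id hx))
      · have h4 : h =ᶠ[nhds 0] g := by
          have hc : Continuous fun x => |g x| - 2 * |x| := by
            have := hg.continuous
            fun_prop
          have : ∀ᶠ x in nhds (0:ℝ), 0 < |g x| - 2 * |x| :=
            (hc.tendsto 0).eventually (lt_mem_nhds (by simpa using g0))
          filter_upwards [this] with y hy
          by_cases hy0 : y = 0
          · rw [hy0, h0]
          · rw [hh y hy0, hid, mul_div_cancel₀ _ hy0]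
            rintro ⟨h1, h2⟩
            have h3 : |g y / y| ≤ 2 := by rw [abs_le]; constructor <;> linarith
            rw [abs_div, div_le_iff₀ (abs_pos.2 hy0)] at h3
            linarith
        exact hg.contDiffAt.congr_of_eventuallyEq h4
    · have h4 : h =ᶠ[nhds x] fun y => y * f (g y / y) := by
        filter_upwards [isOpen_ne.mem_nhds hx] with y hy using hh y hy
      refine ContDiffAt.congr_of_eventuallyEq ?_ h4
      exact contDiffAt_id.mul (hf.contDiffAt.comp x (hg.contDiffAt.div contDiffAt_id hx))
  · have key : ∀ x, Fmap f (x, g x) = (x, h x) := by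
      intro x
      rw [hdef]
      by_cases hx : x = 0
      · simp [Fmap, hx]
      · simp [Fmap, hx]
    ext p
    constructor
    · rintro ⟨_, ⟨x, rfl⟩, rfl⟩
      exact ⟨x, key x⟩
    · rintro ⟨x, rfl⟩
      exact ⟨_, ⟨x, rfl⟩, key x⟩
end

section
/- The map M : ℝ × ℝ → ℝ × ℝ defined by M(x,y) = (x·m(x,y), y·m(x,y)), where m(x,y) = x/√(x² + y²) + 2 for (x,y) ≠ (0,0) and m(0,0) = 2, is a homeomorphism of the plane; moreover its inverse is the map sending (0,0) to (0,0) and sending w ≠ (0,0) to (1/m(w))·w, i.e. the inverse divides each nonzero vector w by the same angular factor m(w) = w₁/‖w‖ + 2. -/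
/-- The angular factor `m(x,y) = x/√(x² + y²) + 2` for `(x,y) ≠ (0,0)`, `m(0,0) = 2`. -/
noncomputable def mfun (p : ℝ × ℝ) : ℝ :=
  if p = (0, 0) then 2 else p.1 / Real.sqrt (p.1 ^ 2 + p.2 ^ 2) + 2

/-- The map `M(x,y) = (x·m(x,y), y·m(x,y))`. -/
noncomputable def Mmap (p : ℝ × ℝ) : ℝ × ℝ :=
  (p.1 * mfun p, p.2 * mfun p)

/-- The candidate inverse of `M`: it sends `(0,0)` to `(0,0)` and divides each
nonzero vector `w` by the angular factor `m(w)`. -/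
noncomputable def Minv (p : ℝ × ℝ) : ℝ × ℝ :=
  if p = (0, 0) then (0, 0) else (1 / mfun p) • p

theorem mfun_eq (p : ℝ × ℝ) : mfun p = p.1 / Real.sqrt (p.1 ^ 2 + p.2 ^ 2) + 2 := by
  unfold mfun
  split_ifs with h
  · simp [h]
  · rfl

theorem Mmap_eq (p : ℝ × ℝ) : Mmap p = mfun p • p := by
  ext <;> simp [Mmap, mul_comm]

theorem Minv_eq (p : ℝ × ℝ) : Minv p = (mfun p)⁻¹ • p := by
  unfold Minv
  split_ifs with h
  · subst h
    ext <;> simp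
  · rw [one_div]

theorem mfun_bd (p : ℝ × ℝ) : 1 ≤ mfun p ∧ mfun p ≤ 3 := by
  have h : |p.1 / Real.sqrt (p.1 ^ 2 + p.2 ^ 2)| ≤ 1 := by
    rw [abs_div, abs_of_nonneg (Real.sqrt_nonneg _)]
    apply div_le_one_of_le₀ _ (Real.sqrt_nonneg _)
    apply Real.abs_le_sqrt
    nlinarith [sq_nonneg p.2]
  rw [mfun_eq]
  have := abs_le.mp h
  constructor <;> linarith

theorem mfun_smul (c : ℝ) (hc : 0 < c) (p : ℝ × ℝ) : mfun (c • p) = mfun p := by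
  rw [mfun_eq, mfun_eq]
  have : (c • p).1 ^ 2 + (c • p).2 ^ 2 = c ^ 2 * (p.1 ^ 2 + p.2 ^ 2) := by
    simp
    ring
  rw [this, Real.sqrt_mul (sq_nonneg c), Real.sqrt_sq hc.le]
  simp only [Prod.smul_fst, smul_eq_mul]
  rw [mul_div_mul_left _ _ hc.ne']

theorem mfun_cont (p : ℝ × ℝ) (hp : p ≠ 0) : ContinuousAt mfun p := by
  rw [show mfun = fun p : ℝ × ℝ => p.1 / Real.sqrt (p.1 ^ 2 + p.2 ^ 2) + 2 from funext mfun_eq]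
  have : Real.sqrt (p.1 ^ 2 + p.2 ^ 2) ≠ 0 := by
    intro h
    rw [Real.sqrt_eq_zero (by positivity)] at h
    apply hp
    ext
    · simp only [Prod.fst_zero]
      nlinarith [sq_nonneg p.1, sq_nonneg p.2]
    · simp only [Prod.snd_zero]
      nlinarith [sq_nonneg p.1, sq_nonneg p.2]
  fun_prop (disch := assumption)

theorem cont_aux (g : ℝ × ℝ → ℝ) (hg : ∀ p, |g p| ≤ 3)
    (hc : ∀ p, p ≠ 0 → ContinuousAt g p) : Continuous fun p => g p • p := by
  rw [continuous_iff_continuousAt]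
  intro p
  by_cases hp : p = 0
  · subst hp
    rw [ContinuousAt, smul_zero]
    apply squeeze_zero_norm (a := fun p : ℝ × ℝ => 3 * ‖p‖)
    · intro p
      rw [norm_smul, Real.norm_eq_abs]
      exact mul_le_mul_of_nonneg_right (hg p) (norm_nonneg _)
    · have : Continuous fun p : ℝ × ℝ => 3 * ‖p‖ := by fun_prop
      simpa using this.tendsto 0
  · exact (hc p hp).smul continuousAt_id

/-- `M` is a homeomorphism of the plane, with inverse `Minv`. -/
theorem stmt4 :
    IsHomeomorph Mmap ∧
      Function.LeftInverse Minv Mmap ∧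
      Function.RightInverse Minv Mmap := by
  have pos : ∀ p, 0 < mfun p := fun p => lt_of_lt_of_le one_pos (mfun_bd p).1
  have hl : Function.LeftInverse Minv Mmap := by
    intro p
    rw [Minv_eq, Mmap_eq, mfun_smul _ (pos p), inv_smul_smul₀ (pos p).ne']
  have hr : Function.RightInverse Minv Mmap := by
    intro p
    rw [Mmap_eq, Minv_eq, mfun_smul _ (inv_pos.mpr (pos p)), smul_inv_smul₀ (pos p).ne']
  refine ⟨isHomeomorph_iff_exists_inverse.mpr ⟨?_, Minv, hl, hr, ?_⟩, hl, hr⟩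
  · rw [show Mmap = fun p => mfun p • p from funext Mmap_eq]
    exact cont_aux _ (fun p => by rw [abs_of_pos (pos p)]; exact (mfun_bd p).2) mfun_cont
  · rw [show Minv = fun p => (mfun p)⁻¹ • p from funext Minv_eq]
    refine cont_aux _ (fun p => ?_) (fun p hp => (mfun_cont p hp).inv₀ (pos p).ne')
    rw [abs_of_pos (inv_pos.mpr (pos p))]
    linarith [inv_le_one_of_one_le₀ (mfun_bd p).1]
end

section
/- Let γ : ℝ → ℝ × ℝ be γ(t) = M(t, t²). Then (1/t)·γ(t) tends to (3,0) as t → 0 from the right and tends to (1,0) as t → 0 from the left; in particular, γ is not differentiable at t = 0. -/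
/-- The parametrization `γ(t) = M(t, t²)` of the image of the parabola. -/
noncomputable def gam (t : ℝ) : ℝ × ℝ := Mmap (t, t ^ 2)

theorem gam_aux (s t : ℝ) (ht : t ≠ 0) (hs : t = s * |t|) :
    (1 / t) • gam t = (s / Real.sqrt (1 + t ^ 2) + 2, t * (s / Real.sqrt (1 + t ^ 2) + 2)) := by
  have h1 : Real.sqrt (t ^ 2 + (t ^ 2) ^ 2) = |t| * Real.sqrt (1 + t ^ 2) := by
    rw [← Real.sqrt_sq_eq_abs, ← Real.sqrt_mul (sq_nonneg t)]
    congr 1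
    ring
  have ha : |t| ≠ 0 := abs_ne_zero.mpr ht
  have hr : Real.sqrt (1 + t ^ 2) ≠ 0 := (Real.sqrt_pos.mpr (by positivity)).ne'
  have hm : mfun (t, t ^ 2) = s / Real.sqrt (1 + t ^ 2) + 2 := by
    have hne : ((t, t ^ 2) : ℝ × ℝ) ≠ (0, 0) := fun h => ht (congrArg Prod.fst h)
    rw [mfun, if_neg hne]
    simp only [h1]
    congr 1
    rw [div_eq_div_iff (mul_ne_zero ha hr) hr]
    linear_combination Real.sqrt (1 + t ^ 2) * hs
  ext
  · simp only [gam, Mmap, hm, Prod.smul_mk, smul_eq_mul]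
    field_simp
  · simp only [gam, Mmap, hm, Prod.smul_mk, smul_eq_mul]
    field_simp

theorem gam_tendsto (s : ℝ) (S : Set ℝ) (hS : ∀ t ∈ S, t ≠ 0 ∧ t = s * |t|) :
    Filter.Tendsto (fun t : ℝ => (1 / t) • gam t) (nhdsWithin 0 S)
      (nhds (s + 2, (0 : ℝ))) := by
  have hc : Continuous (fun t : ℝ =>
      ((s / Real.sqrt (1 + t ^ 2) + 2, t * (s / Real.sqrt (1 + t ^ 2) + 2)) : ℝ × ℝ)) := by
    have hr : ∀ t : ℝ, Real.sqrt (1 + t ^ 2) ≠ 0 := fun t =>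
      (Real.sqrt_pos.mpr (by positivity)).ne'
    fun_prop (disch := exact hr _)
  have h0 := (hc.tendsto 0).mono_left (nhdsWithin_le_nhds (s := S))
  simp only [ne_eq, OfNat.ofNat_ne_zero, not_false_eq_true, zero_pow, add_zero, Real.sqrt_one,
    div_one, zero_mul] at h0
  refine h0.congr' ?_
  filter_upwards [self_mem_nhdsWithin] with t ht
  exact (gam_aux s t (hS t ht).1 (hS t ht).2).symm

/-- `(1/t)·γ(t) → (3,0)` as `t → 0⁺` and `(1/t)·γ(t) → (1,0)` as `t → 0⁻`;
in particular `γ` is not differentiable at `0`. -/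
theorem stmt7 :
    Filter.Tendsto (fun t : ℝ => (1 / t) • gam t) (nhdsWithin 0 (Set.Ioi 0))
      (nhds ((3 : ℝ), (0 : ℝ))) ∧
    Filter.Tendsto (fun t : ℝ => (1 / t) • gam t) (nhdsWithin 0 (Set.Iio 0))
      (nhds ((1 : ℝ), (0 : ℝ))) ∧
    ¬ DifferentiableAt ℝ gam 0 := by
  have hp : Filter.Tendsto (fun t : ℝ => (1 / t) • gam t) (nhdsWithin 0 (Set.Ioi 0))
      (nhds ((3 : ℝ), (0 : ℝ))) := by
    have h := gam_tendsto 1 (Set.Ioi 0) (fun t ht => ⟨ne_of_gt ht, by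
      rw [abs_of_pos ht, one_mul]⟩)
    norm_num at h ⊢
    exact h
  have hn : Filter.Tendsto (fun t : ℝ => (1 / t) • gam t) (nhdsWithin 0 (Set.Iio 0))
      (nhds ((1 : ℝ), (0 : ℝ))) := by
    have h := gam_tendsto (-1) (Set.Iio 0) (fun t ht => ⟨ne_of_lt ht, by
      rw [abs_of_neg ht]; ring⟩)
    norm_num at h ⊢
    exact h
  refine ⟨hp, hn, fun hd => ?_⟩
  have h := hasDerivAt_iff_tendsto_slope.mp hd.hasDerivAt
  have g0 : gam 0 = 0 := by simp [gam, Mmap]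
  have e : slope gam 0 = fun t : ℝ => (1 / t) • gam t := by
    ext1 t
    simp [slope, g0]
  rw [e] at h
  have h1 := tendsto_nhds_unique hp (h.mono_left (nhdsWithin_mono _ fun t ht => ne_of_gt ht))
  have h2 := tendsto_nhds_unique hn (h.mono_left (nhdsWithin_mono _ fun t ht => ne_of_lt ht))
  have h3 := congrArg Prod.fst (h1.trans h2.symm)
  norm_num at h3
end

section
/- Let γ : ℝ → ℝ × ℝ be γ(t) = M(t, t²), with component functions x(t) and y(t), which are twice differentiable for t ≠ 0. Define for t ≠ 0 the signed curvature κ(t) = (x'(t)·y''(t) − y'(t)·x''(t)) / (x'(t)² + y'(t)²)^{3/2}. Then κ(t) tends to 2/3 as t → 0 from the right and tends to 2 as t → 0 from the left. (Thus the image under M of the parabola y = x², which has curvature 2 at the origin, has a jump discontinuity in curvature at the origin.) -/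
/-- The first component `x(t)` of `γ`. -/
noncomputable def gamx (t : ℝ) : ℝ := (gam t).1

/-- The second component `y(t)` of `γ`. -/
noncomputable def gamy (t : ℝ) : ℝ := (gam t).2

/-- The signed curvature of the planar curve `γ`,
`κ = (x'·y'' − y'·x'') / (x'² + y'²)^(3/2)`. -/
noncomputable def kappa (t : ℝ) : ℝ :=
  (deriv gamx t * deriv (deriv gamy) t - deriv gamy t * deriv (deriv gamx) t) /
    (deriv gamx t ^ 2 + deriv gamy t ^ 2) ^ ((3 : ℝ) / 2)

noncomputable def sfun (t : ℝ) : ℝ := (Real.sqrt (1 + t ^ 2))⁻¹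

lemma sfun_deriv (t : ℝ) : HasDerivAt sfun (-t * sfun t ^ 3) t := by
  have hp : 0 < 1 + t ^ 2 := by positivity
  have h1 : HasDerivAt (fun t : ℝ => 1 + t ^ 2) (2 * t) t := by
    simpa using (hasDerivAt_pow 2 t).const_add 1
  have h2 := (h1.sqrt hp.ne').inv (Real.sqrt_pos.2 hp).ne'
  have hs := Real.sqrt_pos.2 hp
  refine h2.congr_deriv ?_
  unfold sfun
  field_simp

lemma sfun_zero : sfun 0 = 1 := by simp [sfun]

lemma d_X (e t : ℝ) : HasDerivAt (fun t => t * (e * sfun t + 2))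
    (e * sfun t + 2 - e * t ^ 2 * sfun t ^ 3) t := by
  refine ((hasDerivAt_id t).mul (((sfun_deriv t).const_mul e).add_const 2)).congr_deriv ?_
  simp only [id]; ring

lemma d_Y (e t : ℝ) : HasDerivAt (fun t => t ^ 2 * (e * sfun t + 2))
    (2 * t * (e * sfun t + 2) - e * t ^ 3 * sfun t ^ 3) t := by
  refine ((hasDerivAt_pow 2 t).mul (((sfun_deriv t).const_mul e).add_const 2)).congr_deriv ?_
  push_cast; ring

lemma d_X2 (e t : ℝ) : HasDerivAt (fun t => e * sfun t + 2 - e * t ^ 2 * sfun t ^ 3)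
    (-3 * e * t * sfun t ^ 3 + 3 * e * t ^ 3 * sfun t ^ 5) t := by
  refine ((((sfun_deriv t).const_mul e).add_const 2).sub
    (((hasDerivAt_pow 2 t).const_mul e).mul ((sfun_deriv t).pow 3))).congr_deriv ?_
  simp only [Pi.pow_apply]; push_cast; ring

lemma d_Y2 (e t : ℝ) :
    HasDerivAt (fun t => 2 * t * (e * sfun t + 2) - e * t ^ 3 * sfun t ^ 3)
    (2 * (e * sfun t + 2) - 5 * e * t ^ 2 * sfun t ^ 3 + 3 * e * t ^ 4 * sfun t ^ 5) t := by
  refine ((((hasDerivAt_id t).const_mul 2).mul (((sfun_deriv t).const_mul e).add_const 2)).sub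
    (((hasDerivAt_pow 3 t).const_mul e).mul ((sfun_deriv t).pow 3))).congr_deriv ?_
  simp only [id, Pi.pow_apply]; push_cast; ring

lemma key (e : ℝ) (he : 0 < e + 2) (U : Set ℝ) (hU : IsOpen U)
    (hm : ∀ t ∈ U, mfun (t, t ^ 2) = e * sfun t + 2) :
    Filter.Tendsto kappa (nhdsWithin 0 U) (nhds (2 / (e + 2))) := by
  have hx : Set.EqOn gamx (fun t => t * (e * sfun t + 2)) U := by
    intro t ht; simp [gamx, gam, Mmap, hm t ht]
  have hy : Set.EqOn gamy (fun t => t ^ 2 * (e * sfun t + 2)) U := by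
    intro t ht; simp [gamy, gam, Mmap, hm t ht]
  have hx1 : Set.EqOn (deriv gamx) (fun t => e * sfun t + 2 - e * t ^ 2 * sfun t ^ 3) U := by
    intro t ht
    rw [(hx.eventuallyEq_of_mem (hU.mem_nhds ht)).deriv_eq]; exact (d_X e t).deriv
  have hy1 : Set.EqOn (deriv gamy)
      (fun t => 2 * t * (e * sfun t + 2) - e * t ^ 3 * sfun t ^ 3) U := by
    intro t ht
    rw [(hy.eventuallyEq_of_mem (hU.mem_nhds ht)).deriv_eq]; exact (d_Y e t).deriv
  have hx2 : ∀ t ∈ U, deriv (deriv gamx) t =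
      -3 * e * t * sfun t ^ 3 + 3 * e * t ^ 3 * sfun t ^ 5 := by
    intro t ht
    rw [(hx1.eventuallyEq_of_mem (hU.mem_nhds ht)).deriv_eq]; exact (d_X2 e t).deriv
  have hy2 : ∀ t ∈ U, deriv (deriv gamy) t =
      2 * (e * sfun t + 2) - 5 * e * t ^ 2 * sfun t ^ 3 + 3 * e * t ^ 4 * sfun t ^ 5 := by
    intro t ht
    rw [(hy1.eventuallyEq_of_mem (hU.mem_nhds ht)).deriv_eq]; exact (d_Y2 e t).deriv
  have hc : Continuous sfun := continuous_iff_continuousAt.2 fun t => (sfun_deriv t).continuousAt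
  have lim : ∀ f : ℝ → ℝ, Continuous f → Filter.Tendsto f (nhdsWithin 0 U) (nhds (f 0)) :=
    fun f hf => (hf.tendsto 0).mono_left nhdsWithin_le_nhds
  have hN := lim (fun t => (e * sfun t + 2 - e * t ^ 2 * sfun t ^ 3) *
      (2 * (e * sfun t + 2) - 5 * e * t ^ 2 * sfun t ^ 3 + 3 * e * t ^ 4 * sfun t ^ 5) -
      (2 * t * (e * sfun t + 2) - e * t ^ 3 * sfun t ^ 3) *
      (-3 * e * t * sfun t ^ 3 + 3 * e * t ^ 3 * sfun t ^ 5)) (by fun_prop)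
  have hD := (lim (fun t => (e * sfun t + 2 - e * t ^ 2 * sfun t ^ 3) ^ 2 +
      (2 * t * (e * sfun t + 2) - e * t ^ 3 * sfun t ^ 3) ^ 2) (by fun_prop)).rpow_const
      (p := (3 : ℝ) / 2) (Or.inr (by norm_num))
  have hpow : ((e + 2) ^ 2) ^ ((3 : ℝ) / 2) = (e + 2) ^ 3 := by
    rw [← Real.rpow_natCast, ← Real.rpow_mul he.le, ← Real.rpow_natCast]; norm_num
  simp only [sfun_zero] at hN hD
  norm_num at hN hD
  rw [hpow] at hD
  have h := hN.div hD (by positivity)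
  have e1 : (e + 2) * (2 * (e + 2)) / (e + 2) ^ 3 = 2 / (e + 2) := by
    field_simp
  rw [e1] at h
  refine h.congr' ?_
  filter_upwards [self_mem_nhdsWithin] with t ht
  simp only [kappa, hx1 ht, hy1 ht, hx2 t ht, hy2 t ht, Pi.div_apply]
  norm_num

lemma sqrt_aux (t : ℝ) : Real.sqrt (t ^ 2 + (t ^ 2) ^ 2) = |t| * Real.sqrt (1 + t ^ 2) := by
  rw [show t ^ 2 + (t ^ 2) ^ 2 = t ^ 2 * (1 + t ^ 2) by ring, Real.sqrt_mul (sq_nonneg t),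
    Real.sqrt_sq_eq_abs]

/-- The signed curvature of `γ` tends to `2/3` as `t → 0⁺` and to `2` as `t → 0⁻`. -/
theorem stmt8 :
    Filter.Tendsto kappa (nhdsWithin 0 (Set.Ioi 0)) (nhds ((2 : ℝ) / 3)) ∧
    Filter.Tendsto kappa (nhdsWithin 0 (Set.Iio 0)) (nhds (2 : ℝ)) := by
  constructor
  · have h := key 1 (by norm_num) (Set.Ioi 0) isOpen_Ioi (by
      intro t ht
      have ht : 0 < t := ht
      have hs : 0 < Real.sqrt (1 + t ^ 2) := Real.sqrt_pos.2 (by positivity)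
      simp only [mfun, sqrt_aux, sfun, Prod.mk.injEq, ht.ne', false_and, if_false, abs_of_pos ht]
      field_simp)
    norm_num at h
    exact h
  · have h := key (-1) (by norm_num) (Set.Iio 0) isOpen_Iio (by
      intro t ht
      have ht : t < 0 := ht
      have hs : 0 < Real.sqrt (1 + t ^ 2) := Real.sqrt_pos.2 (by positivity)
      have ht' := ht.ne
      simp only [mfun, sqrt_aux, sfun, Prod.mk.injEq, ht.ne, false_and, if_false, abs_of_neg ht]
      field_simp)
    norm_num at h
    exact h
end

section
/- Let γ : ℝ → ℝ × ℝ be γ(t) = M(t, t²). Suppose δ > 0 and h : ℝ → ℝ is a function such that for every t with |t| < δ, the point γ(t) lies on the graph of h, i.e. (γ(t)).2 = h((γ(t)).1). Then the derivative of h is not differentiable at 0; in particular h is not twice differentiable at 0, so the image under M of the parabola y = x² is not (locally at the origin) the graph of any C² function. (This shows M does not map every C^k curve to a C^k curve for any k ≥ 2.) -/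
noncomputable def kf (e t : ℝ) : ℝ := 2 + e / Real.sqrt (1 + t ^ 2)

noncomputable def kd (e t : ℝ) : ℝ := 2 + e / (Real.sqrt (1 + t ^ 2)) ^ 3

lemma gam_eq (e t : ℝ) (he : |t| * e = t) (ht : t ≠ 0) :
    gam t = (t * kf e t, t * (t * kf e t)) := by
  have h1 : Real.sqrt (t ^ 2 + (t ^ 2) ^ 2) = |t| * Real.sqrt (1 + t ^ 2) := by
    rw [← Real.sqrt_sq_eq_abs, ← Real.sqrt_mul (sq_nonneg t)]
    congr 1; ring
  have hs : 0 < Real.sqrt (1 + t ^ 2) := Real.sqrt_pos.2 (by positivity)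
  have ha : |t| ≠ 0 := abs_ne_zero.2 ht
  have h2 : t / (|t| * Real.sqrt (1 + t ^ 2)) = e / Real.sqrt (1 + t ^ 2) := by
    rw [div_eq_div_iff (by positivity) hs.ne']
    nth_rewrite 1 [← he]
    ring
  have h3 : mfun (t, t ^ 2) = kf e t := by
    simp only [mfun, Prod.mk.injEq, ht, false_and, if_false, h1, h2, kf]
    ring
  simp only [gam, Mmap, h3, Prod.mk.injEq, true_and]
  ring

lemma cont_kf (e : ℝ) : Continuous (kf e) := by
  unfold kf
  refine continuous_const.add (continuous_const.div (by fun_prop) ?_)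
  intro t
  exact (Real.sqrt_pos.2 (by positivity)).ne'

lemma cont_kd (e : ℝ) : Continuous (kd e) := by
  unfold kd
  refine continuous_const.add (continuous_const.div (by fun_prop) ?_)
  intro t
  exact pow_ne_zero _ (Real.sqrt_pos.2 (by positivity)).ne'

lemma deriv_kf (e t : ℝ) : HasStrictDerivAt (fun t => t * kf e t) (kd e t) t := by
  have hp : 0 < 1 + t ^ 2 := by positivity
  have hs : 0 < Real.sqrt (1 + t ^ 2) := Real.sqrt_pos.2 hp
  have h1 : HasStrictDerivAt (fun t : ℝ => 1 + t ^ 2) (2 * t) t := by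
    simpa using ((hasStrictDerivAt_id t).pow 2).const_add 1
  have h2 : HasStrictDerivAt (fun t : ℝ => e * (Real.sqrt (1 + t ^ 2))⁻¹) (e * (-(2 * t / (2 * Real.sqrt (1 + t ^ 2))) / Real.sqrt (1 + t ^ 2) ^ 2)) t := by
    have := ((hasStrictDerivAt_inv hs.ne').comp t (h1.sqrt hp.ne')).const_mul e
    have hq : e * (-(2 * t / (2 * Real.sqrt (1 + t ^ 2))) / Real.sqrt (1 + t ^ 2) ^ 2) = e * (-(Real.sqrt (1 + t ^ 2) ^ 2)⁻¹ * (2 * t / (2 * Real.sqrt (1 + t ^ 2)))) := by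
      ring
    rw [hq]
    exact this
  have h3 := (hasStrictDerivAt_id t).mul (h2.const_add 2)
  have h4 : kd e t = 1 * (2 + e * (Real.sqrt (1 + t ^ 2))⁻¹) + t * (e * (-(2 * t / (2 * Real.sqrt (1 + t ^ 2))) / Real.sqrt (1 + t ^ 2) ^ 2)) := by
    unfold kd
    have := Real.sq_sqrt hp.le
    set s := Real.sqrt (1 + t ^ 2)
    have h5 : t ^ 2 = s ^ 2 - 1 := by linarith
    field_simp
    rw [h5]; ring
  rw [h4]
  exact h3

open Filter Topology in
lemma key_s9 (e δ : ℝ) (hδ : 0 < δ) (he : |e| = 1) (h : ℝ → ℝ)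
    (hgraph : ∀ t : ℝ, |t| < δ → (gam t).2 = h ((gam t).1)) (U : Set ℝ) (hU : IsOpen U)
    [NeBot (𝓝[U] (0 : ℝ))] (hUe : ∀ t ∈ U, t ≠ 0 ∧ |t| * e = t) (c : ℝ)
    (hc : HasDerivAt (deriv h) c 0) : c = 2 / (2 + e) := by
  have he2 : -1 ≤ e := (abs_le.1 he.le).1
  have hk0 : kf e 0 = 2 + e := by simp [kf]
  have hd0 : kd e 0 = 2 + e := by simp [kd]
  have hpos : 0 < 2 + e := by linarith
  have tk : Tendsto (kf e) (𝓝[U] 0) (𝓝 (2 + e)) := by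
    rw [← hk0]; exact (cont_kf e).continuousAt.mono_left nhdsWithin_le_nhds
  have td : Tendsto (kd e) (𝓝[U] 0) (𝓝 (2 + e)) := by
    rw [← hd0]; exact (cont_kd e).continuousAt.mono_left nhdsWithin_le_nhds
  have tt : Tendsto (fun t : ℝ => t) (𝓝[U] 0) (𝓝 0) := nhdsWithin_le_nhds
  have tx : Tendsto (fun t => t * kf e t) (𝓝[U] 0) (𝓝 0) := by
    simpa using tt.mul tk
  have ekp : ∀ᶠ t in 𝓝[U] 0, 0 < kf e t := tk.eventually (lt_mem_nhds hpos)
  have edp : ∀ᶠ t in 𝓝[U] 0, 0 < kd e t := td.eventually (lt_mem_nhds hpos)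
  have eU : ∀ᶠ t in 𝓝[U] (0 : ℝ), t ∈ U := self_mem_nhdsWithin
  have eδ : ∀ᶠ t in 𝓝[U] (0 : ℝ), |t| < δ := by
    have : Tendsto (fun t : ℝ => |t|) (𝓝[U] 0) (𝓝 0) := by simpa using tt.abs
    exact this.eventually (gt_mem_nhds hδ)
  have hder : ∀ᶠ t in 𝓝[U] (0 : ℝ),
      deriv h (t * kf e t) = t * kf e t / kd e t + t := by
    filter_upwards [edp, eU, eδ] with t h1 h2 h3
    have hs := deriv_kf e t
    have hl := (hs.to_localInverse h1.ne').hasDerivAt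
    have hr := HasStrictFDerivAt.eventually_right_inverse
      (hs.hasStrictFDerivAt_equiv h1.ne')
    have hg : hs.localInverse _ _ _ h1.ne' (t * kf e t) = t :=
      HasStrictFDerivAt.localInverse_apply_image (hs.hasStrictFDerivAt_equiv h1.ne')
    set g := hs.localInverse _ _ _ h1.ne' with hgdef
    have hN : ∀ᶠ u in 𝓝 (t * kf e t), g u ∈ U ∩ {s | |s| < δ} := by
      apply hl.continuousAt.eventually
      rw [hg]
      exact (hU.inter (isOpen_lt continuous_abs continuous_const)).mem_nhds ⟨h2, h3⟩
    have heq : h =ᶠ[𝓝 (t * kf e t)] fun u => g u * u := by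
      filter_upwards [hr, hN] with u hu1 hu2
      have hu1' : g u * kf e (g u) = u := hu1
      have := hgraph (g u) hu2.2
      rw [gam_eq e (g u) (hUe _ hu2.1).2 (hUe _ hu2.1).1] at this
      simp only [hu1'] at this
      exact this.symm
    rw [heq.deriv_eq]
    have := (hl.mul (hasDerivAt_id (t * kf e t))).deriv
    have h6 : deriv (fun u => g u * u) (t * kf e t) = _ := this
    rw [h6, hg]
    simp only [id]
    field_simp
  have h00 : deriv h 0 = 0 := by
    have a1 : Tendsto (fun t => deriv h (t * kf e t)) (𝓝[U] 0) (𝓝 (deriv h 0)) :=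
      hc.continuousAt.tendsto.comp tx
    have a2 : Tendsto (fun t => t * kf e t / kd e t + t) (𝓝[U] 0) (𝓝 0) := by
      simpa using (tx.div td hpos.ne').add tt
    exact tendsto_nhds_unique (a1.congr' hder) a2
  have b1 := hasDerivAt_iff_tendsto_slope.1 hc
  have tx' : Tendsto (fun t => t * kf e t) (𝓝[U] 0) (𝓝[≠] 0) := by
    refine tendsto_nhdsWithin_iff.2 ⟨tx, ?_⟩
    filter_upwards [ekp, eU] with t h1 h2
    exact mul_ne_zero (hUe t h2).1 h1.ne'
  have b2 := b1.comp tx'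
  have b3 : Tendsto (fun t => (kd e t)⁻¹ + (kf e t)⁻¹) (𝓝[U] 0)
      (𝓝 ((2 + e)⁻¹ + (2 + e)⁻¹)) := (td.inv₀ hpos.ne').add (tk.inv₀ hpos.ne')
  have b4 := tendsto_nhds_unique (b2.congr' ?_) b3
  · rw [b4]; ring
  · filter_upwards [hder, ekp, edp, eU] with t h1 h2 h3 h4
    have := (hUe t h4).1
    simp only [Function.comp, slope_def_field, h1, h00]
    field_simp
    ring

/-- If the image of the parabola under `M` lies, near the origin, on the graph of a
function `h : ℝ → ℝ`, then `h'` is not differentiable at `0`; in particular the image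
is not locally the graph of a `C²` function. -/
theorem stmt9 (δ : ℝ) (hδ : 0 < δ) (h : ℝ → ℝ)
    (hgraph : ∀ t : ℝ, |t| < δ → (gam t).2 = h ((gam t).1)) :
    ¬ DifferentiableAt ℝ (deriv h) 0 := by
  intro hd
  have hc := hd.hasDerivAt
  have h1 := key_s9 1 δ hδ (by norm_num) h hgraph (Set.Ioi 0) isOpen_Ioi
    (fun t ht => ⟨ne_of_gt ht, by rw [abs_of_pos ht, mul_one]⟩) _ hc
  have h2 := key_s9 (-1) δ hδ (by norm_num) h hgraph (Set.Iio 0) isOpen_Iio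
    (fun t ht => ⟨ne_of_lt ht, by rw [abs_of_neg ht]; ring⟩) _ hc
  rw [h1] at h2
  norm_num at h2
end

section
/- Let γ : ℝ → ℝ × ℝ be γ(t) = M(t, t²). Then there exist δ > 0 and a continuously differentiable function h : ℝ → ℝ (C¹ on all of ℝ) with h(0) = 0 and h'(0) = 0 such that for every t with |t| < δ, the point γ(t) lies on the graph of h, i.e. (γ(t)).2 = h((γ(t)).1). (Thus the image under M of the parabola y = x² is, near the origin, the graph of a C¹ function, even though by the curvature jump it is not the graph of any C² function.) -/
lemma inv_exists (f f' : ℝ → ℝ) (hf : ContDiff ℝ 1 f) (hd : ∀ x, HasDerivAt f (f' x) x)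
    (h1 : ∀ x, 1 ≤ f' x) (h0 : f 0 = 0) :
    ∃ g : ℝ → ℝ, ContDiff ℝ 1 g ∧ ∀ t, g (f t) = t := by
  have hmono : StrictMono f := by
    apply strictMono_of_deriv_pos
    intro x
    rw [(hd x).deriv]
    linarith [h1 x]
  have hm2 : Monotone (fun x => f x - x) := by
    apply monotone_of_deriv_nonneg
    · intro x
      exact ((hd x).sub (hasDerivAt_id x)).differentiableAt
    · intro x
      have := ((hd x).sub (hasDerivAt_id x)).deriv
      have h2 : deriv (fun x => f x - x) x = f' x - 1 := this
      rw [h2]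
      linarith [h1 x]
  have htop : Filter.Tendsto f Filter.atTop Filter.atTop := by
    apply Filter.tendsto_atTop_mono' _ _ Filter.tendsto_id
    filter_upwards [Filter.eventually_ge_atTop 0] with x hx
    have := hm2 hx
    simp only [h0] at this
    simp only [id]
    linarith
  have hbot : Filter.Tendsto f Filter.atBot Filter.atBot := by
    apply Filter.tendsto_atBot_mono' _ _ Filter.tendsto_id
    filter_upwards [Filter.eventually_le_atBot 0] with x hx
    have := hm2 hx
    simp only [h0] at this
    simp only [id]
    linarith
  have hsurj : Function.Surjective f := hf.continuous.surjective htop hbot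
  let e : ℝ ≃ₜ ℝ := (hmono.orderIsoOfSurjective f hsurj).toHomeomorph
  have he : ∀ x, e x = f x := fun x => rfl
  refine ⟨e.symm, ?_, ?_⟩
  · exact e.contDiff_symm_deriv (f' := f') (fun x => by linarith [h1 x]) hd hf
  · intro t
    rw [← he, e.symm_apply_apply]

lemma glue (u v : ℝ → ℝ) (hu : ContDiff ℝ 1 u) (hv : ContDiff ℝ 1 v)
    (h0 : u 0 = v 0) (h1 : deriv u 0 = deriv v 0) :
    ContDiff ℝ 1 (fun x => if x ≤ 0 then u x else v x) ∧
    deriv (fun x => if x ≤ 0 then u x else v x) 0 = deriv u 0 := by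
  have hdu : ∀ x, HasDerivAt u (deriv u x) x := fun x =>
    (hu.differentiable (by norm_num) x).hasDerivAt
  have hdv : ∀ x, HasDerivAt v (deriv v x) x := fun x =>
    (hv.differentiable (by norm_num) x).hasDerivAt
  have key : ∀ x, HasDerivAt (fun x => if x ≤ 0 then u x else v x)
      (if x ≤ 0 then deriv u x else deriv v x) x := by
    intro x
    rcases lt_trichotomy x 0 with hx | hx | hx
    · rw [if_pos hx.le]
      apply (hdu x).congr_of_eventuallyEq
      filter_upwards [Iio_mem_nhds hx] with y hy
      rw [if_pos (le_of_lt hy)]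
    · subst hx
      rw [if_pos le_rfl, ← hasDerivWithinAt_univ, ← Set.Iic_union_Ici (a := (0:ℝ))]
      apply HasDerivWithinAt.union
      · apply (hdu 0).hasDerivWithinAt.congr
        · intro y hy
          exact if_pos hy
        · simp
      · rw [h1]
        apply (hdv 0).hasDerivWithinAt.congr
        · intro y hy
          by_cases h : y ≤ 0
          · have : y = 0 := le_antisymm h hy
            subst this
            simpa using h0
          · exact if_neg h
        · simpa using h0
    · rw [if_neg (not_le.2 hx)]
      apply (hdv x).congr_of_eventuallyEq
      filter_upwards [Ioi_mem_nhds hx] with y hy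
      rw [if_neg (not_le.2 hy)]
  refine ⟨?_, by rw [(key 0).deriv, if_pos le_rfl]⟩
  rw [contDiff_one_iff_deriv]
  refine ⟨fun x => (key x).differentiableAt, ?_⟩
  rw [funext fun x => (key x).deriv]
  apply Continuous.if_le (hu.continuous_deriv le_rfl) (hv.continuous_deriv le_rfl)
    continuous_id continuous_const
  intro x hx
  simp only [id] at hx
  rw [hx, h1]

lemma base (c : ℝ) (hc : -1 ≤ c) (hc1 : c ≤ 1) :
    ∃ g : ℝ → ℝ, ContDiff ℝ 1 g ∧ ∀ t, g (2 * t + c * (t / √(1 + t ^ 2))) = t := by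
  have hpos : ∀ t : ℝ, 0 < 1 + t ^ 2 := fun t => by positivity
  apply inv_exists (fun t => 2 * t + c * (t / √(1 + t ^ 2)))
    (fun t => 2 + c * (1 / √(1 + t ^ 2) ^ 3))
  · apply ContDiff.add (by fun_prop)
    apply ContDiff.mul contDiff_const
    apply ContDiff.div contDiff_id
    · apply ContDiff.sqrt (by fun_prop)
      exact fun t => (hpos t).ne'
    · exact fun t => (Real.sqrt_pos.2 (hpos t)).ne'
  · intro t
    have hs := Real.sqrt_pos.2 (hpos t)
    have hsq := Real.sq_sqrt (hpos t).le
    have h1 : HasDerivAt (fun t : ℝ => 1 + t ^ 2) (2 * t) t := by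
      simpa using (hasDerivAt_pow 2 t).const_add 1
    have h2 := h1.sqrt (hpos t).ne'
    have h3 := (hasDerivAt_id t).div h2 hs.ne'
    have h4 := ((hasDerivAt_id t).const_mul 2).add (h3.const_mul c)
    refine h4.congr_deriv ?_
    simp only [id]
    set s := √(1 + t ^ 2)
    have : t ^ 2 = s ^ 2 - 1 := by linarith
    field_simp
    rw [this]
    ring
  · intro t
    have hs : 1 ≤ √(1 + t ^ 2) := Real.one_le_sqrt.2 (by nlinarith [sq_nonneg t])
    have h3 : 1 ≤ √(1 + t ^ 2) ^ 3 := one_le_pow₀ hs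
    have h4 : 1 / √(1 + t ^ 2) ^ 3 ≤ 1 := by
      rw [div_le_one (by linarith)]; exact h3
    have h5 : 0 ≤ 1 / √(1 + t ^ 2) ^ 3 := by positivity
    show 1 ≤ 2 + c * (1 / √(1 + t ^ 2) ^ 3)
    nlinarith
  · simp

lemma deriv_xg (g : ℝ → ℝ) (hg : ContDiff ℝ 1 g) (h0 : g 0 = 0) :
    deriv (fun x => x * g x) 0 = 0 := by
  have h := (hasDerivAt_id (0:ℝ)).mul (hg.differentiable (by norm_num) 0).hasDerivAt
  have h2 : deriv (fun x => x * g x) 0 = _ := h.deriv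
  rw [h2]; simp [h0]

/-- Near the origin, the image of the parabola under `M` is the graph of a `C¹`
function `h` with `h(0) = 0` and `h'(0) = 0`. -/
theorem stmt10 :
    ∃ δ : ℝ, 0 < δ ∧ ∃ h : ℝ → ℝ, ContDiff ℝ 1 h ∧ h 0 = 0 ∧ deriv h 0 = 0 ∧
      ∀ t : ℝ, |t| < δ → (gam t).2 = h ((gam t).1) := by
  obtain ⟨u, hu, hui⟩ := base (-1) (by norm_num) (by norm_num)
  obtain ⟨v, hv, hvi⟩ := base 1 (by norm_num) (by norm_num)
  have hu0 : u 0 = 0 := by simpa using hui 0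
  have hv0 : v 0 = 0 := by simpa using hvi 0
  obtain ⟨hC, hD⟩ := glue (fun x => x * u x) (fun x => x * v x) (contDiff_id.mul hu)
    (contDiff_id.mul hv) (by simp) (by rw [deriv_xg u hu hu0, deriv_xg v hv hv0])
  refine ⟨1, one_pos, _, hC, by simp, by rw [hD, deriv_xg u hu hu0], ?_⟩
  intro t _
  have hs : 1 ≤ √(1 + t ^ 2) := Real.one_le_sqrt.2 (by nlinarith [sq_nonneg t])
  have hsq : √(t ^ 2 + (t ^ 2) ^ 2) = |t| * √(1 + t ^ 2) := by
    rw [← Real.sqrt_sq_eq_abs, ← Real.sqrt_mul (sq_nonneg t)]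
    congr 1; ring
  have h2 : (gam t).2 = (gam t).1 * t := by
    simp only [gam, Mmap]; ring
  rw [h2]
  have hi : 1 / √(1 + t ^ 2) ≤ 1 := by
    rw [div_le_one (by linarith)]; exact hs
  have hi0 : 0 ≤ 1 / √(1 + t ^ 2) := by positivity
  rcases lt_trichotomy t 0 with ht | ht | ht
  · have h1 : (gam t).1 = 2 * t + (-1) * (t / √(1 + t ^ 2)) := by
      simp only [gam, Mmap, mfun, Prod.mk.injEq, ht.ne, false_and, if_false, hsq, abs_of_neg ht]
      have := ht.ne
      field_simp
      ring
    have hle : (gam t).1 ≤ 0 := by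
      rw [h1, div_eq_mul_one_div]; nlinarith
    rw [if_pos hle, h1, hui]
  · subst ht
    simp [gam, Mmap]
  · have h1 : (gam t).1 = 2 * t + 1 * (t / √(1 + t ^ 2)) := by
      simp only [gam, Mmap, mfun, Prod.mk.injEq, ht.ne', false_and, if_false, hsq, abs_of_pos ht]
      have := ht.ne'
      field_simp
      ring
    have hle : ¬ (gam t).1 ≤ 0 := by
      rw [h1, div_eq_mul_one_div]; nlinarith
    rw [if_neg hle, h1, hvi]
end
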